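/- arXiv:1110.1823 — 3 statements merged into one kernel-verified Lean document; each statement's English description precedes it below -/
import Mathlib

section
/- Let Ω be a bounded domain (bounded, connected, open set) in ℂ and let φ be the restriction to Ω of a continuous function on the closure of Ω. Then the Hankel operator H^Ω_φ is a compact operator from A²(Ω) to L²(Ω). -/
open MeasureTheory Metric
noncomputable section

abbrev L2C (V : Set ℂ) := Lp ℂ 2 (volume.restrict V)

/-- The Bergman space of an open set `V ⊆ ℂ`: square-integrable functions on `V`
that agree a.e. with a holomorphic function on `V`. -/
def A2C (V : Set ℂ) : Submodule ℂ (L2C V) where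
  carrier := {f | ∃ g : ℂ → ℂ, DifferentiableOn ℂ g V ∧
    ∀ᵐ z ∂(volume.restrict V), f z = g z}
  zero_mem' := ⟨0, differentiableOn_const 0, by
    filter_upwards [Lp.coeFn_zero ℂ 2 (volume.restrict _)] with z h
    simpa using h⟩
  add_mem' := by
    rintro f f' ⟨g, hg, hfg⟩ ⟨g', hg', hfg'⟩
    refine ⟨g + g', hg.add hg', ?_⟩
    filter_upwards [Lp.coeFn_add f f', hfg, hfg'] with z h1 h2 h3
    rw [h1]; simp [h2, h3]
  smul_mem' := by
    rintro c f ⟨g, hg, hfg⟩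
    refine ⟨c • g, hg.const_smul c, ?_⟩
    filter_upwards [Lp.coeFn_smul c f, hfg] with z h1 h2
    rw [h1]; simp [h2]

/-- `H` is the Hankel operator with symbol `φ` on the Bergman space of `V`:
for every `f` in the Bergman space, `H f` is orthogonal to the Bergman space and
`φ·f - H f` agrees a.e. with a holomorphic function, i.e. `φ·f - H f = P^V(φ·f)`. -/
def IsHankelC (V : Set ℂ) (φ : ℂ → ℂ) (H : A2C V →L[ℂ] L2C V) : Prop :=
  (∀ f : A2C V, ∀ g ∈ A2C V, @inner ℂ _ _ (H f) g = 0) ∧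
  (∀ f : A2C V, ∃ g : ℂ → ℂ, DifferentiableOn ℂ g V ∧
    ∀ᵐ z ∂(volume.restrict V), φ z * (f : L2C V) z - (H f) z = g z)

/-!
Write `P` for the Bergman projection, `Q = 1 - P`, and `M_φ` for multiplication by `φ`, so that
`H_φ = Q M_φ`. From `M_ψ M_χ = M_ψ P M_χ + M_ψ Q M_χ` one gets `H_{ψχ} = H_ψ P M_χ + Q M_ψ H_χ`,
and `φ ↦ H_φ` is continuous, so the symbols with compact Hankel operator form a closed subalgebra
of the continuous functions on the closure. By Stone–Weierstrass it only has to contain the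
constants, `z` and `conj z`. The first two multiply the Bergman space into itself, so their Hankel
operators vanish. For `conj z`, the Cauchy transform `𝒞 f (z) = π⁻¹ ∫ f w / (z - w) dw` solves
`∂u/∂(conj z) = f`, so `conj z * f - 𝒞 f` is holomorphic whenever `f` is, and `H_{conj z} = Q 𝒞` on
the Bergman space. Finally `𝒞` is compact on `L²` of a bounded set: by Schur's test the norm of a
convolution operator is controlled by the `L¹` norm of its kernel, and `1 / z`, being locally
integrable, is an `L¹` limit of compactly supported continuous kernels, which give compact
operators.
-/

open scoped ENNReal NNReal BoundedContinuousFunction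

/-! ### The Schur test -/

section Schur

variable {α β : Type*} [MeasurableSpace α] [MeasurableSpace β] {μ : Measure α} {ν : Measure β}

theorem eLpNorm_two_sq {E : Type*} [NormedAddCommGroup E] (f : α → E) :
    eLpNorm f 2 μ ^ 2 = ∫⁻ x, ‖f x‖ₑ ^ 2 ∂μ := by
  simpa using eLpNorm_nnreal_pow_eq_lintegral (f := f) (μ := μ) (p := 2) two_ne_zero

theorem sq_lintegral_mul_le_lintegral_mul_lintegral_mul_sq {k f : α → ℝ≥0∞}
    (hk : AEMeasurable k μ) (hf : AEMeasurable f μ) :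
    (∫⁻ x, k x * f x ∂μ) ^ 2 ≤ (∫⁻ x, k x ∂μ) * ∫⁻ x, k x * f x ^ 2 ∂μ := by
  have half : (0 : ℝ) ≤ 1 / 2 := by norm_num
  have sqrt_sq (a : ℝ≥0∞) : (a ^ (1 / 2 : ℝ)) ^ 2 = a := by
    rw [← ENNReal.rpow_mul_natCast]; norm_num
  have sqrt_mul (a b : ℝ≥0∞) : a ^ (1 / 2 : ℝ) * (a * b ^ 2) ^ (1 / 2 : ℝ) = a * b := by
    rw [ENNReal.mul_rpow_of_nonneg _ _ half, ← mul_assoc, ← sq, sqrt_sq,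
      ← ENNReal.rpow_natCast_mul]
    norm_num
  have cauchySchwarz := ENNReal.lintegral_mul_norm_pow_le hk (hk.mul (hf.pow_const 2)) half half
    (by norm_num)
  simp only [Pi.mul_apply, sqrt_mul] at cauchySchwarz
  calc (∫⁻ x, k x * f x ∂μ) ^ 2
      ≤ ((∫⁻ x, k x ∂μ) ^ (1 / 2 : ℝ) * (∫⁻ x, k x * f x ^ 2 ∂μ) ^ (1 / 2 : ℝ)) ^ 2 := by gcongr
    _ = _ := by rw [mul_pow, sqrt_sq, sqrt_sq]

theorem lintegral_sq_lintegral_mul_le [SFinite μ] [SFinite ν] {k : α → β → ℝ≥0∞}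
    {f : β → ℝ≥0∞} {A B : ℝ≥0∞} (hk : Measurable (Function.uncurry k)) (hf : AEMeasurable f ν)
    (hA : ∀ᵐ x ∂μ, ∫⁻ y, k x y ∂ν ≤ A) (hB : ∀ᵐ y ∂ν, ∫⁻ x, k x y ∂μ ≤ B) :
    ∫⁻ x, (∫⁻ y, k x y * f y ∂ν) ^ 2 ∂μ ≤ A * B * ∫⁻ y, f y ^ 2 ∂ν := by
  have hkf : AEMeasurable (Function.uncurry fun x y => k x y * f y ^ 2) (μ.prod ν) :=
    hk.aemeasurable.mul (hf.comp_snd.pow_const 2)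
  calc ∫⁻ x, (∫⁻ y, k x y * f y ∂ν) ^ 2 ∂μ
      ≤ ∫⁻ x, A * ∫⁻ y, k x y * f y ^ 2 ∂ν ∂μ := by
        refine lintegral_mono_ae (hA.mono fun x hx => ?_)
        exact (sq_lintegral_mul_le_lintegral_mul_lintegral_mul_sq hk.of_uncurry_left.aemeasurable
          hf).trans (by gcongr)
    _ = A * ∫⁻ y, ∫⁻ x, k x y * f y ^ 2 ∂μ ∂ν := by
        rw [← lintegral_lintegral_swap hkf]
        exact lintegral_const_mul'' _ hkf.lintegral_prod_right'
    _ = A * ∫⁻ y, (∫⁻ x, k x y ∂μ) * f y ^ 2 ∂ν := by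
        simp only [lintegral_mul_const _ hk.of_uncurry_right]
    _ ≤ A * ∫⁻ y, B * f y ^ 2 ∂ν := by
        gcongr 1
        exact lintegral_mono_ae (hB.mono fun y hy => by gcongr)
    _ = A * B * ∫⁻ y, f y ^ 2 ∂ν := by
        rw [lintegral_const_mul'' _ (hf.pow_const 2), mul_assoc]

/-- A measurable kernel satisfying the hypotheses of the Schur test, i.e. whose rows and columns are
essentially bounded in `L¹`. It acts on `L²` as an integral operator, `IsSchurKernel.operator`. -/
structure IsSchurKernel {𝕜 : Type*} [RCLike 𝕜] (k : α → β → 𝕜) (μ : Measure α) (ν : Measure β)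
    (A B : ℝ≥0) : Prop where
  measurable : Measurable (Function.uncurry k)
  lintegral_row_le : ∀ᵐ x ∂μ, ∫⁻ y, ‖k x y‖ₑ ∂ν ≤ A
  lintegral_col_le : ∀ᵐ y ∂ν, ∫⁻ x, ‖k x y‖ₑ ∂μ ≤ B

namespace IsSchurKernel

variable {𝕜 : Type*} [RCLike 𝕜] {k l : α → β → 𝕜} {A B A' B' : ℝ≥0} {f : β → 𝕜}

theorem aestronglyMeasurable_mul (hk : IsSchurKernel k μ ν A B) (hf : MemLp f 2 ν) :
    AEStronglyMeasurable (fun p : α × β => k p.1 p.2 * f p.2) (μ.prod ν) :=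
  hk.measurable.aestronglyMeasurable.mul hf.1.comp_snd

variable [SFinite μ] [SFinite ν]

theorem lintegral_sq_le (hk : IsSchurKernel k μ ν A B) (hf : MemLp f 2 ν) :
    ∫⁻ x, (∫⁻ y, ‖k x y * f y‖ₑ ∂ν) ^ 2 ∂μ ≤ A * B * eLpNorm f 2 ν ^ 2 := by
  simp only [enorm_mul, eLpNorm_two_sq]
  exact lintegral_sq_lintegral_mul_le hk.measurable.enorm hf.1.enorm hk.lintegral_row_le
    hk.lintegral_col_le

theorem ae_integrable_mul (hk : IsSchurKernel k μ ν A B) (hf : MemLp f 2 ν) :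
    ∀ᵐ x ∂μ, Integrable (fun y => k x y * f y) ν := by
  have meas := hk.aestronglyMeasurable_mul hf
  have finite : ∀ᵐ x ∂μ, (∫⁻ y, ‖k x y * f y‖ₑ ∂ν) ^ 2 < ∞ :=
    ae_lt_top' (meas.enorm.lintegral_prod_right'.pow_const 2) <| ne_top_of_le_ne_top
      (ENNReal.mul_ne_top (by finiteness) (ENNReal.pow_ne_top hf.2.ne)) (hk.lintegral_sq_le hf)
  filter_upwards [meas.prodMk_left, finite] with x hx hx'
  exact ⟨hx, by rwa [ENNReal.pow_lt_top_iff, or_iff_left two_ne_zero] at hx'⟩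

theorem eLpNorm_integral_le (hk : IsSchurKernel k μ ν A B) (hf : MemLp f 2 ν) :
    eLpNorm (fun x => ∫ y, k x y * f y ∂ν) 2 μ ≤ NNReal.sqrt (A * B) * eLpNorm f 2 ν := by
  rw [← ENNReal.pow_le_pow_left_iff two_ne_zero, mul_pow, ← ENNReal.coe_pow, NNReal.sq_sqrt,
    ENNReal.coe_mul]
  refine le_trans ?_ (hk.lintegral_sq_le hf)
  rw [eLpNorm_two_sq]
  gcongr
  exact enorm_integral_le_lintegral_enorm _

theorem memLp_integral (hk : IsSchurKernel k μ ν A B) (hf : MemLp f 2 ν) :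
    MemLp (fun x => ∫ y, k x y * f y ∂ν) 2 μ :=
  ⟨(hk.aestronglyMeasurable_mul hf).integral_prod_right',
    (hk.eLpNorm_integral_le hf).trans_lt (ENNReal.mul_lt_top (by finiteness) hf.2)⟩

/-- The integral operator `f ↦ (x ↦ ∫ y, k x y * f y)` on `L²` given by a Schur kernel `k`. -/
def operator (hk : IsSchurKernel k μ ν A B) : Lp 𝕜 2 ν →L[𝕜] Lp 𝕜 2 μ :=
  LinearMap.mkContinuous
    { toFun f := (hk.memLp_integral (Lp.memLp f)).toLp
      map_add' f g := by
        rw [← MemLp.toLp_add, MemLp.toLp_eq_toLp_iff]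
        filter_upwards [hk.ae_integrable_mul (Lp.memLp f), hk.ae_integrable_mul (Lp.memLp g)]
          with x hf hg
        rw [Pi.add_apply, ← integral_add hf hg]
        refine integral_congr_ae ((Lp.coeFn_add f g).mono fun y hy => ?_)
        simp only [hy, Pi.add_apply, mul_add]
      map_smul' c f := by
        rw [RingHom.id_apply, ← MemLp.toLp_const_smul, MemLp.toLp_eq_toLp_iff]
        refine .of_forall fun x => ?_
        rw [Pi.smul_apply, ← integral_smul]
        refine integral_congr_ae ((Lp.coeFn_smul c f).mono fun y hy => ?_)
        simp only [hy, Pi.smul_apply, smul_eq_mul, mul_left_comm] }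
    (NNReal.sqrt (A * B)) fun f => by
      refine (Lp.norm_toLp _ (hk.memLp_integral (Lp.memLp f))).trans_le ?_
      have := ENNReal.toReal_mono (ENNReal.mul_ne_top ENNReal.coe_ne_top (Lp.memLp f).2.ne)
        (hk.eLpNorm_integral_le (Lp.memLp f))
      rwa [ENNReal.toReal_mul, ← Lp.norm_def] at this

theorem coeFn_operator (hk : IsSchurKernel k μ ν A B) (f : Lp 𝕜 2 ν) :
    hk.operator f =ᵐ[μ] fun x => ∫ y, k x y * f y ∂ν :=
  (hk.memLp_integral (Lp.memLp f)).coeFn_toLp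

theorem norm_operator_le (hk : IsSchurKernel k μ ν A B) :
    ‖hk.operator‖ ≤ NNReal.sqrt (A * B) :=
  LinearMap.mkContinuous_norm_le _ (NNReal.coe_nonneg _) _

theorem operator_sub (hk : IsSchurKernel k μ ν A B) (hl : IsSchurKernel l μ ν A' B')
    {A'' B'' : ℝ≥0} (hkl : IsSchurKernel (k - l) μ ν A'' B'') :
    hk.operator - hl.operator = hkl.operator := by
  refine ContinuousLinearMap.ext fun f => Lp.ext ?_
  filter_upwards [Lp.coeFn_sub (hk.operator f) (hl.operator f), hk.coeFn_operator f,
    hl.coeFn_operator f, hkl.coeFn_operator f, hk.ae_integrable_mul (Lp.memLp f),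
    hl.ae_integrable_mul (Lp.memLp f)] with x hsub hkx hlx hklx ik il
  rw [_root_.sub_apply, hsub, Pi.sub_apply, hkx, hlx, hklx, ← integral_sub ik il]
  simp only [Pi.sub_apply, sub_mul]

end IsSchurKernel

end Schur

/-! ### Compact integral operators -/

section VectorIntegral

variable {β : Type*} [MeasurableSpace β] {ν : Measure β} {𝕜 E : Type*} [RCLike 𝕜]
  [NormedAddCommGroup E] [NormedSpace 𝕜 E] [NormedSpace ℝ E] [SMulCommClass ℝ 𝕜 E]
  [CompleteSpace E] {p q : ℝ≥0∞} [p.HolderConjugate q] [Fact (1 ≤ p)] [Fact (1 ≤ q)]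

/-- The integral `f ↦ ∫ y, f y • κ y` of scalar functions in `Lᵖ` against a vector-valued function
`κ` in the conjugate `L^q`. -/
def integralSMulCLM : Lp E q ν →L[𝕜] Lp 𝕜 p ν →L[𝕜] E :=
  ((ContinuousLinearMap.lsmul 𝕜 𝕜 : 𝕜 →L[𝕜] E →L[𝕜] E).lpPairing ν p q).flip

theorem integralSMulCLM_apply (κ : Lp E q ν) (f : Lp 𝕜 p ν) :
    integralSMulCLM (𝕜 := 𝕜) κ f = ∫ y, f y • κ y ∂ν := by
  rw [integralSMulCLM, ContinuousLinearMap.flip_apply, ContinuousLinearMap.lpPairing_eq_integral]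
  rfl

theorem isCompactOperator_integralSMulCLM (hq : q ≠ ∞) (κ : Lp E q ν) :
    IsCompactOperator (integralSMulCLM (𝕜 := 𝕜) (p := p) κ) := by
  induction κ using Lp.induction hq with
  | @indicatorConst c s hs hνs =>
    let coefficient : Lp 𝕜 p ν →L[𝕜] 𝕜 := integralSMulCLM (indicatorConstLp q hs hνs.ne 1)
    have rankOne : integralSMulCLM (indicatorConstLp q hs hνs.ne c) =
        (ContinuousLinearMap.toSpanSingleton 𝕜 c).comp coefficient := by
      ext f
      rw [ContinuousLinearMap.comp_apply, ContinuousLinearMap.toSpanSingleton_apply,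
        integralSMulCLM_apply, integralSMulCLM_apply, ← integral_smul_const]
      refine integral_congr_ae ?_
      filter_upwards [indicatorConstLp_coeFn (p := q) (hs := hs) (hμs := hνs.ne) (c := c),
        indicatorConstLp_coeFn (p := q) (hs := hs) (hμs := hνs.ne) (c := (1 : 𝕜))] with y hc h1
      by_cases hy : y ∈ s <;> simp [hc, h1, hy]
    rw [Lp.simpleFunc.coe_indicatorConst, rankOne]
    exact (isCompactOperator_of_locallyCompactSpace_dom coefficient).clm_comp
      (ContinuousLinearMap.toSpanSingleton 𝕜 c)
  | add hf hg _ ihf ihg =>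
    rw [map_add]
    exact ihf.add ihg
  | isClosed =>
    exact (isClosed_setOfPred_isCompactOperator (M₁ := Lp 𝕜 p ν)).preimage
      (integralSMulCLM (𝕜 := 𝕜)).continuous

end VectorIntegral

theorem IsSchurKernel.isCompactOperator_operator_of_memLp {α β 𝕜 : Type*} [RCLike 𝕜]
    [TopologicalSpace α] [MeasurableSpace α] [BorelSpace α] [SecondCountableTopologyEither α 𝕜]
    [MeasurableSpace β] {μ : Measure α} [IsFiniteMeasure μ] {ν : Measure β} [SFinite ν]
    {κ : β → α →ᵇ 𝕜} {A B : ℝ≥0} (hk : IsSchurKernel (fun x y => κ y x) μ ν A B)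
    (hκ : MemLp κ 2 ν) :
    IsCompactOperator hk.operator := by
  have factor : hk.operator =
      (BoundedContinuousFunction.toLp 2 μ 𝕜).comp (integralSMulCLM hκ.toLp) := by
    refine ContinuousLinearMap.ext fun f => Lp.ext ?_
    have integrable : Integrable (fun y => f y • hκ.toLp κ y) ν :=
      memLp_one_iff_integrable.1 ((Lp.memLp hκ.toLp).smul (Lp.memLp f))
    filter_upwards [hk.coeFn_operator f,
      BoundedContinuousFunction.coeFn_toLp 2 μ 𝕜 (integralSMulCLM hκ.toLp f)] with x hx hx'
    have eval := (BoundedContinuousFunction.evalCLM 𝕜 x).integral_comp_comm integrable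
    rw [hx, ContinuousLinearMap.comp_apply, hx', integralSMulCLM_apply]
    refine .trans (integral_congr_ae ?_) eval
    filter_upwards [hκ.coeFn_toLp] with y hy
    simp [hy, mul_comm]
  rw [factor]
  exact (isCompactOperator_integralSMulCLM (p := 2) ENNReal.ofNat_ne_top hκ.toLp).clm_comp
    (BoundedContinuousFunction.toLp 2 μ 𝕜)

/-! ### Weakly singular convolution operators -/

section Convolution

variable {G 𝕜 : Type*} [RCLike 𝕜] [NormedAddCommGroup G] [ProperSpace G]
  [MeasurableSpace G] [BorelSpace G] {η : Measure G} [η.IsAddHaarMeasure] {k : G → 𝕜}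

theorem isSchurKernel_comp_sub (hk : Measurable k) (hi : Integrable k η) (s t : Set G) :
    IsSchurKernel (fun x y => k (x - y)) (η.restrict s) (η.restrict t)
      (∫ x, ‖k x‖ ∂η).toNNReal (∫ x, ‖k x‖ ∂η).toNNReal where
  measurable := hk.comp measurable_sub
  lintegral_row_le := .of_forall fun x => by
    refine (lintegral_mono' Measure.restrict_le_self le_rfl).trans_eq ?_
    rw [lintegral_sub_left_eq_self (fun y => ‖k y‖ₑ) x,
      ← ofReal_integral_norm_eq_lintegral_enorm hi]
    rfl
  lintegral_col_le := .of_forall fun y => by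
    refine (lintegral_mono' Measure.restrict_le_self le_rfl).trans_eq ?_
    rw [lintegral_sub_right_eq_self (fun x => ‖k x‖ₑ) y,
      ← ofReal_integral_norm_eq_lintegral_enorm hi]
    rfl

theorem norm_operator_comp_sub_le (hk : Measurable k) (hi : Integrable k η) (s t : Set G) :
    ‖(isSchurKernel_comp_sub hk hi s t).operator‖ ≤ ∫ x, ‖k x‖ ∂η := by
  refine (IsSchurKernel.norm_operator_le _).trans_eq ?_
  rw [NNReal.sqrt_mul_self, Real.coe_toNNReal _ (integral_nonneg fun x => norm_nonneg _)]

variable {s t : Set G}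

theorem isCompactOperator_comp_sub_of_hasCompactSupport (hs : η s ≠ ∞) (ht : η t ≠ ∞)
    (hk : Continuous k) (hc : HasCompactSupport k) :
    IsCompactOperator (isSchurKernel_comp_sub hk.measurable
      (hk.integrable_of_hasCompactSupport (μ := η) hc) s t).operator := by
  have : IsFiniteMeasure (η.restrict s) := isFiniteMeasure_restrict.2 hs
  have : IsFiniteMeasure (η.restrict t) := isFiniteMeasure_restrict.2 ht
  obtain ⟨M, hM⟩ := hk.bounded_above_of_compact_support hc
  let κ (y : G) : G →ᵇ 𝕜 := .ofNormedAddCommGroup (fun x => k (x - y))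
    (hk.comp (continuous_sub_right y)) M fun x => hM _
  have continuous_κ : Continuous κ := by
    refine Metric.continuous_iff'.2 fun y ε hε => ?_
    obtain ⟨δ, hδ, uniform⟩ := Metric.uniformContinuous_iff.1
      (hc.uniformContinuous_of_continuous hk) (ε / 2) (half_pos hε)
    filter_upwards [ball_mem_nhds y hδ] with y' hy'
    refine ((BoundedContinuousFunction.dist_le (half_pos hε).le).2 fun x => ?_).trans_lt
      (half_lt_self hε)
    exact (uniform (by rwa [dist_sub_left])).le
  refine IsSchurKernel.isCompactOperator_operator_of_memLp (κ := κ) _ ?_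
  refine MemLp.of_bound continuous_κ.aestronglyMeasurable M (.of_forall fun y => ?_)
  exact BoundedContinuousFunction.norm_ofNormedAddCommGroup_le _
    ((norm_nonneg (k 0)).trans (hM 0)) _

theorem isCompactOperator_comp_sub (hs : η s ≠ ∞) (ht : η t ≠ ∞) (hk : Measurable k)
    (hi : Integrable k η) :
    IsCompactOperator (isSchurKernel_comp_sub hk hi s t).operator := by
  refine isClosed_setOfPred_isCompactOperator.closure_subset
    (Metric.mem_closure_iff.2 fun ε hε => ?_)
  obtain ⟨g, hgc, hg, hgcont, hgi⟩ := hi.exists_hasCompactSupport_integral_sub_le (half_pos hε)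
  have hkg := isSchurKernel_comp_sub (hk.sub hgcont.measurable) (hi.sub hgi) s t
  refine ⟨_, isCompactOperator_comp_sub_of_hasCompactSupport hs ht hgcont hgc, ?_⟩
  rw [dist_eq_norm, IsSchurKernel.operator_sub _ _ hkg]
  calc ‖hkg.operator‖ ≤ ∫ x, ‖k x - g x‖ ∂η :=
        norm_operator_comp_sub_le (hk.sub hgcont.measurable) (hi.sub hgi) s t
    _ ≤ ε / 2 := hg
    _ < ε := half_lt_self hε

end Convolution

/-! ### Integration over circles and discs -/

section Polar

variable {E : Type*} [NormedAddCommGroup E] [NormedSpace ℝ E] {f : ℂ → E}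

theorem integrableOn_smul_comp_polarCoord_symm (hf : Integrable f) :
    IntegrableOn (fun p : ℝ × ℝ => p.1 • f (Complex.polarCoord.symm p)) polarCoord.target := by
  have hg : Integrable (fun p => f (Complex.measurableEquivRealProd.symm p)) :=
    Complex.volume_preserving_equiv_real_prod.symm.integrable_comp_of_integrable hf
  have := (integrableOn_image_iff_integrableOn_abs_det_fderiv_smul volume
    polarCoord.open_target.measurableSet
    (fun p _ => (hasFDerivAt_polarCoord_symm p).hasFDerivWithinAt) polarCoord.symm.injOn _).1
    hg.integrableOn
  refine this.congr_fun (fun p hp => ?_) polarCoord.open_target.measurableSet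
  have : 0 < p.1 := hp.1
  simp only [det_fderivPolarCoordSymm, abs_of_pos this,
    Complex.measurableEquivRealProd_symm_polarCoord_symm_apply]

theorem setIntegral_Ioo_neg_pi_pi_polarCoord_symm (f : ℂ → E) (ρ : ℝ) :
    ∫ θ in Set.Ioo (-Real.pi) Real.pi, f (Complex.polarCoord.symm (ρ, θ)) =
      (2 * Real.pi) • Real.circleAverage f 0 ρ := by
  have periodic : Function.Periodic (fun θ => f (circleMap 0 ρ θ)) (2 * Real.pi) :=
    (periodic_circleMap 0 ρ).comp f
  have shift := periodic.intervalIntegral_add_eq (-Real.pi) 0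
  rw [zero_add, two_mul, neg_add_cancel_left] at shift
  rw [← integral_Ioc_eq_integral_Ioo, ← intervalIntegral.integral_of_le (by linarith [Real.pi_pos]),
    Real.circleAverage, smul_inv_smul₀ (by positivity), two_mul, ← shift]
  simp only [Complex.polarCoord_symm_apply, circleMap_zero, Complex.exp_mul_I,
    Complex.ofReal_cos, Complex.ofReal_sin]

theorem integral_eq_integral_circleAverage (hf : Integrable f) (a : ℂ) :
    ∫ w, f w = ∫ ρ in Set.Ioi (0 : ℝ), (2 * Real.pi * ρ) • Real.circleAverage f a ρ := by
  have integrable := integrableOn_smul_comp_polarCoord_symm (hf.comp_add_left a)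
  rw [polarCoord_target] at integrable
  rw [← integral_add_left_eq_self f a, ← Complex.integral_comp_polarCoord_symm, polarCoord_target,
    Measure.volume_eq_prod, setIntegral_prod _ integrable]
  refine setIntegral_congr_fun measurableSet_Ioi fun ρ _ => ?_
  dsimp only
  rw [integral_smul, setIntegral_Ioo_neg_pi_pi_polarCoord_symm (fun w => f (a + w)),
    smul_smul, mul_comm ρ]
  simp only [add_comm a, Real.circleAverage_map_add_const]

theorem setIntegral_ball_eq_integral_circleAverage {a : ℂ} {r : ℝ}
    (hf : IntegrableOn f (ball a r)) :
    ∫ w in ball a r, f w =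
      ∫ ρ in Set.Ioo 0 r, (2 * Real.pi * ρ) • Real.circleAverage f a ρ := by
  have indicator_eq : Set.EqOn
      (fun ρ => (2 * Real.pi * ρ) • Real.circleAverage ((ball a r).indicator f) a ρ)
      ((Set.Iio r).indicator fun ρ => (2 * Real.pi * ρ) • Real.circleAverage f a ρ)
      (Set.Ioi 0) := fun ρ hρ => by
    have dist_eq (w : ℂ) (hw : w ∈ sphere a |ρ|) : dist w a = ρ := by
      rwa [mem_sphere, abs_of_pos hρ] at hw
    dsimp only
    by_cases hr : ρ < r
    · rw [Set.indicator_of_mem (Set.mem_Iio.2 hr)]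
      congr 1
      refine Real.circleAverage_congr_sphere fun w hw => Set.indicator_of_mem ?_ f
      rwa [mem_ball, dist_eq w hw]
    · have vanish : Set.EqOn ((ball a r).indicator f) 0 (sphere a |ρ|) := fun w hw =>
        Set.indicator_of_notMem (by rwa [mem_ball, dist_eq w hw]) f
      rw [Set.indicator_of_notMem (mt Set.mem_Iio.1 hr), Real.circleAverage_congr_sphere vanish]
      simp [Real.circleAverage]
  rw [← integral_indicator measurableSet_ball, integral_eq_integral_circleAverage
    ((integrable_indicator_iff measurableSet_ball).2 hf) a,
    setIntegral_congr_fun measurableSet_Ioi indicator_eq, setIntegral_indicator measurableSet_Iio,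
    Set.Ioi_inter_Iio]

end Polar

section MeanValue

variable {E : Type*} [NormedAddCommGroup E] [NormedSpace ℂ E] {g : ℂ → E} {a : ℂ} {r : ℝ}

theorem integrableOn_ball_of_differentiableOn (hg : DifferentiableOn ℂ g (closedBall a r)) :
    IntegrableOn g (ball a r) :=
  (hg.continuousOn.integrableOn_compact (isCompact_closedBall a r)).mono_set
    ball_subset_closedBall

variable [CompleteSpace E]

theorem setIntegral_Ioo_two_pi_mul_smul (hr : 0 ≤ r) (c : E) :
    ∫ ρ in Set.Ioo 0 r, (2 * Real.pi * ρ) • c = (Real.pi * r ^ 2) • c := by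
  rw [integral_smul_const, ← integral_Ioc_eq_integral_Ioo, ← intervalIntegral.integral_of_le hr,
    intervalIntegral.integral_const_mul, integral_id]
  congr 1
  ring

theorem setIntegral_ball_eq_smul_center (hr : 0 ≤ r)
    (hg : DifferentiableOn ℂ g (closedBall a r)) :
    ∫ w in ball a r, g w = (Real.pi * r ^ 2) • g a := by
  rw [setIntegral_ball_eq_integral_circleAverage (integrableOn_ball_of_differentiableOn hg),
    ← setIntegral_Ioo_two_pi_mul_smul hr]
  refine setIntegral_congr_fun measurableSet_Ioo fun ρ hρ => ?_
  have : DiffContOnCl ℂ g (ball a |ρ|) := hg.diffContOnCl_ball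
    (closedBall_subset_closedBall ((abs_of_pos hρ.1).trans_le hρ.2.le))
  simp only [this.circleAverage]

end MeanValue

/-! ### The Cauchy transform -/

theorem integrableOn_inv_ball (r : ℝ) : IntegrableOn (fun w : ℂ => w⁻¹) (ball 0 r) :=
  integrableOn_ball_of_norm_le_rpow (C := 1) (α := 1) (by simp [Complex.finrank_real_complex])
    (by simp [Complex.finrank_real_complex])
    (.of_forall fun w => by simp [Real.rpow_neg_one]) measurable_inv.aestronglyMeasurable

theorem integrableOn_inv_sub {s : Set ℂ} (hs : Bornology.IsBounded s) (z : ℂ) :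
    IntegrableOn (fun w => (z - w)⁻¹) s := by
  obtain ⟨r, hr⟩ := hs.subset_ball z
  refine IntegrableOn.mono_set ?_ hr
  have := ((integrable_indicator_iff measurableSet_ball).2
    (integrableOn_inv_ball r)).comp_sub_left z
  refine this.integrableOn.congr_fun (fun w hw => ?_) measurableSet_ball
  exact Set.indicator_of_mem (by rwa [mem_ball_zero_iff, ← dist_eq_norm, dist_comm]) _

theorem circleAverage_inv_sub_of_lt_dist {z a : ℂ} {ρ : ℝ} (h : |ρ| < dist z a) :
    Real.circleAverage (fun w => (z - w)⁻¹) a ρ = (z - a)⁻¹ := by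
  refine DiffContOnCl.circleAverage (DifferentiableOn.diffContOnCl_ball (U := closedBall a |ρ|)
    (fun w hw => ?_) subset_rfl)
  have : z - w ≠ 0 := sub_ne_zero.2 fun hzw => h.not_ge (hzw ▸ mem_closedBall.1 hw)
  exact DifferentiableAt.differentiableWithinAt (by fun_prop (disch := assumption))

theorem circleAverage_inv_sub_of_dist_lt {z a : ℂ} {ρ : ℝ} (h : dist z a < |ρ|) :
    Real.circleAverage (fun w => (z - w)⁻¹) a ρ = 0 := by
  have denominator_ne {w : ℂ} (hw : ‖w‖ ≤ 1) : (z - a) * w - ρ ≠ 0 := fun h0 => by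
    have := congrArg norm (sub_eq_zero.1 h0)
    rw [norm_mul, Complex.norm_real, Real.norm_eq_abs, ← dist_eq_norm] at this
    exact (this.symm.trans_le (mul_le_of_le_one_right dist_nonneg hw)).not_gt h
  have holomorphic : DiffContOnCl ℂ (fun w => w / ((z - a) * w - ρ)) (ball 0 |1|) :=
    DifferentiableOn.diffContOnCl_ball (U := closedBall 0 1) (fun w hw =>
      have := denominator_ne (mem_closedBall_zero_iff.1 hw)
      DifferentiableAt.differentiableWithinAt (by fun_prop (disch := assumption))) (by simp)
  -- Reflecting the circle moves the pole, which lies inside it, to the outside.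
  calc Real.circleAverage (fun w => (z - w)⁻¹) a ρ
      = Real.circleAverage (fun w => (z - (ρ * w⁻¹ + a))⁻¹) 0 1 := by
        rw [Real.circleAverage_eq_circleAverage_zero_one, ← Real.circleAverage_zero_one_congr_inv]
    _ = Real.circleAverage (fun w => w / ((z - a) * w - ρ)) 0 1 := by
        refine Real.circleAverage_congr_sphere fun w hw => ?_
        have : w ≠ 0 := by rintro rfl; simp at hw
        have : z - (ρ * w⁻¹ + a) = ((z - a) * w - ρ) / w := by field_simp; ring
        rw [this, inv_div]
    _ = 0 := by rw [holomorphic.circleAverage, zero_div]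

theorem setIntegral_ball_inv_sub {z a : ℂ} {r : ℝ} (h : dist z a < r) :
    ∫ w in ball a r, (z - w)⁻¹ = Real.pi * (starRingEnd ℂ) (z - a) := by
  have average : ∀ᵐ ρ ∂volume.restrict (Set.Ioo 0 r),
      (2 * Real.pi * ρ) • Real.circleAverage (fun w => (z - w)⁻¹) a ρ =
        (Set.Iio (dist z a)).indicator (fun ρ => (2 * Real.pi * ρ) • (z - a)⁻¹) ρ := by
    filter_upwards [Measure.ae_ne _ (dist z a), ae_restrict_mem measurableSet_Ioo] with ρ hne hρ
    rcases hne.lt_or_gt with hlt | hgt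
    · rw [Set.indicator_of_mem (Set.mem_Iio.2 hlt),
        circleAverage_inv_sub_of_lt_dist (by rwa [abs_of_pos hρ.1])]
    · rw [Set.indicator_of_notMem (Set.notMem_Iio.2 hgt.le),
        circleAverage_inv_sub_of_dist_lt (by rwa [abs_of_pos hρ.1]), smul_zero]
  rw [setIntegral_ball_eq_integral_circleAverage (integrableOn_inv_sub isBounded_ball z),
    integral_congr_ae average, setIntegral_indicator measurableSet_Iio, Set.Ioo_inter_Iio,
    min_eq_right h.le, setIntegral_Ioo_two_pi_mul_smul dist_nonneg]
  have norm_sq : ((dist z a : ℝ) : ℂ) ^ 2 = (z - a) * (starRingEnd ℂ) (z - a) := by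
    rw [Complex.mul_conj', dist_eq_norm]
  rcases eq_or_ne z a with rfl | hne
  · simp
  · rw [Complex.real_smul]
    push_cast
    rw [norm_sq]
    field_simp [sub_ne_zero.2 hne]

theorem sub_dist_le_norm_sub_of_disjoint_ball {s : Set ℂ} {p z w : ℂ} {r : ℝ}
    (hs : Disjoint s (ball p r)) (hw : w ∈ s) : r - dist z p ≤ ‖z - w‖ := by
  have far : r ≤ dist w p := not_lt.1 (hs.notMem_of_mem_left hw)
  rw [← dist_eq_norm, dist_comm z w]
  linarith [dist_triangle w z p]

theorem integrableOn_inv_sub_mul_of_disjoint_ball {s : Set ℂ} {f : ℂ → ℂ} {p z : ℂ} {r : ℝ}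
    (hsm : MeasurableSet s) (hf : IntegrableOn f s) (hs : Disjoint s (ball p r))
    (hz : z ∈ ball p r) : IntegrableOn (fun w => (z - w)⁻¹ * f w) s := by
  have gap : 0 < r - dist z p := sub_pos.2 hz
  refine hf.bdd_mul (c := (r - dist z p)⁻¹) (by fun_prop) ?_
  filter_upwards [ae_restrict_mem hsm] with w hw
  rw [norm_inv]
  exact inv_anti₀ gap (sub_dist_le_norm_sub_of_disjoint_ball hs hw)

theorem differentiableAt_setIntegral_inv_sub_mul {s : Set ℂ} {f : ℂ → ℂ} {p : ℂ} {r : ℝ}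
    (hr : 0 < r) (hsm : MeasurableSet s) (hf : IntegrableOn f s) (hs : Disjoint s (ball p r)) :
    DifferentiableAt ℂ (fun z => ∫ w in s, (z - w)⁻¹ * f w) p := by
  have gap {z w : ℂ} (hz : z ∈ ball p (r / 2)) (hw : w ∈ s) : r / 2 ≤ ‖z - w‖ := by
    linarith [sub_dist_le_norm_sub_of_disjoint_ball (z := z) hs hw, mem_ball.1 hz]
  have measurable_inv (z : ℂ) : Measurable fun w => (z - w)⁻¹ := by fun_prop
  refine (hasDerivAt_integral_of_dominated_loc_of_deriv_le (F' := fun z w => -((z - w) ^ 2)⁻¹ * f w)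
    (bound := fun w => ((r / 2) ^ 2)⁻¹ * ‖f w‖) (ball_mem_nhds p (half_pos hr))
    (.of_forall fun z => (measurable_inv z).aestronglyMeasurable.mul hf.1)
    (integrableOn_inv_sub_mul_of_disjoint_ball hsm hf hs (mem_ball_self hr))
    (.mul (Measurable.aestronglyMeasurable (by fun_prop)) hf.1) ?_ (hf.norm.const_mul _)
    ?_).2.differentiableAt
  · filter_upwards [ae_restrict_mem hsm] with w hw z hz
    rw [norm_mul, norm_neg, norm_inv, norm_pow]
    gcongr
    exact gap hz hw
  · filter_upwards [ae_restrict_mem hsm] with w hw z hz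
    have : z - w ≠ 0 := norm_pos_iff.1 ((half_pos hr).trans_le (gap hz hw))
    simpa [neg_div] using (((hasDerivAt_id z).sub_const w).fun_inv this).mul_const (f w)

section HolomorphicDensity

variable {g : ℂ → ℂ} {a z : ℂ} {r : ℝ}

theorem inv_sub_mul_ae_eq (g : ℂ → ℂ) (z : ℂ) (s : Set ℂ) :
    (fun w => (z - w)⁻¹ * g z - dslope g z w) =ᵐ[volume.restrict s] fun w => (z - w)⁻¹ * g w := by
  filter_upwards [Measure.ae_ne _ z] with w hw
  rw [dslope_of_ne _ hw, slope_def_field, ← neg_sub z w, div_neg, div_eq_inv_mul]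
  ring

theorem differentiableOn_dslope_of_mem_ball (hg : DifferentiableOn ℂ g (closedBall a r))
    (hz : z ∈ ball a r) : DifferentiableOn ℂ (dslope g z) (closedBall a r) :=
  (Complex.differentiableOn_dslope (Filter.mem_of_superset (isOpen_ball.mem_nhds hz)
    ball_subset_closedBall)).2 hg

theorem integrableOn_ball_inv_sub_mul (hg : DifferentiableOn ℂ g (closedBall a r))
    (hz : z ∈ ball a r) : IntegrableOn (fun w => (z - w)⁻¹ * g w) (ball a r) :=
  (((integrableOn_inv_sub isBounded_ball z).mul_const _).sub
    (integrableOn_ball_of_differentiableOn (differentiableOn_dslope_of_mem_ball hg hz))).congr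
      (inv_sub_mul_ae_eq g z _)

theorem setIntegral_ball_inv_sub_mul (hg : DifferentiableOn ℂ g (closedBall a r))
    (hz : z ∈ ball a r) :
    ∫ w in ball a r, (z - w)⁻¹ * g w =
      Real.pi * (starRingEnd ℂ (z - a) * g z - r ^ 2 * dslope g a z) := by
  have hd := differentiableOn_dslope_of_mem_ball hg hz
  have dslope_swap : dslope g z a = dslope g a z := by
    rcases eq_or_ne z a with rfl | hza
    · rfl
    · rw [dslope_of_ne _ hza, dslope_of_ne _ hza.symm, slope_comm]
  rw [← integral_congr_ae (inv_sub_mul_ae_eq g z _), integral_sub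
    ((integrableOn_inv_sub isBounded_ball z).mul_const _)
    (integrableOn_ball_of_differentiableOn hd),
    integral_mul_const, setIntegral_ball_inv_sub hz,
    setIntegral_ball_eq_smul_center (dist_nonneg.trans hz.le) hd, dslope_swap, Complex.real_smul]
  push_cast
  ring

end HolomorphicDensity

/-- The Cauchy transform of a density `f` on `s`, the standard solution `u` of the inhomogeneous
Cauchy–Riemann equation `∂u/∂(conj z) = f` on `s`. -/
def cauchyTransform (s : Set ℂ) (f : ℂ → ℂ) (z : ℂ) : ℂ :=
  (Real.pi : ℂ)⁻¹ * ∫ w in s, (z - w)⁻¹ * f w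

theorem differentiableOn_conj_mul_sub_cauchyTransform {s : Set ℂ} {g : ℂ → ℂ} (hs : IsOpen s)
    (hg : DifferentiableOn ℂ g s) (hi : IntegrableOn g s) :
    DifferentiableOn ℂ (fun z => starRingEnd ℂ z * g z - cauchyTransform s g z) s := by
  intro p hp
  obtain ⟨r, hr, hrs⟩ := nhds_basis_closedBall.mem_iff.1 (hs.mem_nhds hp)
  have ball_subset : ball p r ⊆ s := ball_subset_closedBall.trans hrs
  have measurable_diff : MeasurableSet (s \ ball p r) := hs.measurableSet.diff measurableSet_ball
  have outer_integrable : IntegrableOn g (s \ ball p r) := hi.mono_set Set.sdiff_subset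
  have outer := differentiableAt_setIntegral_inv_sub_mul hr measurable_diff outer_integrable
    Set.disjoint_sdiff_left
  have dslope_diff : DifferentiableAt ℂ (dslope g p) p :=
    ((Complex.differentiableOn_dslope (hs.mem_nhds hp)).2 hg).differentiableAt (hs.mem_nhds hp)
  have g_diff : DifferentiableAt ℂ g p := hg.differentiableAt (hs.mem_nhds hp)
  -- Near `p`, the disc contributes `conj (z - p) * g z` up to a holomorphic term, and the
  -- integral over the rest of `s` is holomorphic.
  have decomposition : (fun z => starRingEnd ℂ z * g z - cauchyTransform s g z) =ᶠ[nhds p]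
      fun z => starRingEnd ℂ p * g z + r ^ 2 * dslope g p z -
        (Real.pi : ℂ)⁻¹ * ∫ w in s \ ball p r, (z - w)⁻¹ * g w := by
    filter_upwards [ball_mem_nhds p hr] with z hz
    rw [cauchyTransform, ← Set.union_sdiff_cancel ball_subset, setIntegral_union
      Set.disjoint_sdiff_right measurable_diff (integrableOn_ball_inv_sub_mul (hg.mono hrs) hz)
      (integrableOn_inv_sub_mul_of_disjoint_ball measurable_diff outer_integrable
        Set.disjoint_sdiff_left hz), Set.union_sdiff_cancel ball_subset,
      setIntegral_ball_inv_sub_mul (hg.mono hrs) hz, mul_add, inv_mul_cancel_left₀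
        (Complex.ofReal_ne_zero.2 Real.pi_ne_zero), map_sub]
    ring
  refine (DifferentiableAt.congr_of_eventuallyEq ?_ decomposition).differentiableWithinAt
  fun_prop

theorem exists_isCompactOperator_cauchyTransform {s : Set ℂ} (hsm : MeasurableSet s)
    (hs : Bornology.IsBounded s) :
    ∃ T : L2C s →L[ℂ] L2C s, IsCompactOperator T ∧
      ∀ f : L2C s, T f =ᵐ[volume.restrict s] cauchyTransform s f := by
  obtain ⟨R, hR⟩ := (hs.sub hs).subset_ball 0
  let k : ℂ → ℂ := (ball 0 R).indicator fun w => (Real.pi : ℂ)⁻¹ * w⁻¹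
  have hk : Measurable k := (measurable_inv.const_mul _).indicator measurableSet_ball
  have hi : Integrable k := (integrable_indicator_iff measurableSet_ball).2
    ((integrableOn_inv_ball R).const_mul _)
  refine ⟨_, isCompactOperator_comp_sub hs.measure_lt_top.ne hs.measure_lt_top.ne hk hi,
    fun f => ?_⟩
  filter_upwards [IsSchurKernel.coeFn_operator (isSchurKernel_comp_sub hk hi s s) f,
    ae_restrict_mem hsm] with z hz hzs
  rw [hz, cauchyTransform, ← integral_const_mul]
  refine setIntegral_congr_fun hsm fun w hw => ?_
  dsimp only [k]
  rw [Set.indicator_of_mem (hR (Set.sub_mem_sub hzs hw)), mul_assoc]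

/-! ### The Bergman space -/

section Bergman

open Filter Topology

theorem exists_tendstoLocallyUniformlyOn {ι X β : Type*} [TopologicalSpace X] [UniformSpace β]
    [CompleteSpace β] [Nonempty β] {F : ι → X → β} {l : Filter ι} [l.NeBot] {s : Set X}
    (hF : ∀ x ∈ s, ∃ t ∈ 𝓝[s] x, UniformCauchySeqOn F l t) :
    ∃ G, TendstoLocallyUniformlyOn F G l s := by
  have hlim : ∀ x ∈ s, ∃ y, Tendsto (fun i => F i x) l (𝓝 y) := fun x hx =>
    have ⟨_, ht, hFt⟩ := hF x hx
    CompleteSpace.complete (hFt.cauchy_map (mem_of_mem_nhdsWithin hx ht))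
  choose! G hG using hlim
  refine ⟨G, fun u hu x hx => ?_⟩
  obtain ⟨t, ht, hFt⟩ := hF x hx
  exact ⟨t ∩ s, inter_mem ht self_mem_nhdsWithin,
    (hFt.mono Set.inter_subset_left).tendstoUniformlyOn_of_tendsto (fun y hy => hG y hy.2) u hu⟩

variable {s : Set ℂ}

theorem sqrt_pi_mul_norm_le {f : L2C s} {g : ℂ → ℂ} (hg : DifferentiableOn ℂ g s)
    (hfg : f =ᵐ[volume.restrict s] g) {a : ℂ} {r : ℝ} (hr : 0 < r) (has : closedBall a r ⊆ s) :
    √Real.pi * r * ‖g a‖ ≤ ‖f‖ := by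
  have hball : ball a r ∩ s = ball a r := Set.inter_eq_left.2 (ball_subset_closedBall.trans has)
  have hμ : volume.restrict s (ball a r) = volume (ball a r) := by
    rw [Measure.restrict_apply measurableSet_ball, hball]
  have hfin : volume.restrict s (ball a r) ≠ ∞ := hμ ▸ measure_ball_lt_top.ne
  have hinner : inner ℂ (indicatorConstLp 2 measurableSet_ball hfin (1 : ℂ)) f =
      (Real.pi * r ^ 2) • g a := by
    rw [L2.inner_indicatorConstLp_one, integral_congr_ae (ae_restrict_of_ae hfg),
      Measure.restrict_restrict measurableSet_ball, hball,
      setIntegral_ball_eq_smul_center hr.le (hg.mono has)]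
  have hnorm : ‖indicatorConstLp 2 measurableSet_ball hfin (1 : ℂ)‖ = √Real.pi * r := by
    rw [norm_indicatorConstLp two_ne_zero ENNReal.ofNat_ne_top, Measure.real, hμ,
      Complex.volume_ball, ENNReal.toReal_ofNat, ← Real.sqrt_eq_rpow]
    simp [hr.le, mul_comm]
  have hcs := norm_inner_le_norm (𝕜 := ℂ) (indicatorConstLp 2 measurableSet_ball hfin (1 : ℂ)) f
  rw [hinner, hnorm, norm_smul_of_nonneg (by positivity)] at hcs
  refine le_of_mul_le_mul_left (le_of_eq_of_le ?_ hcs) (by positivity : 0 < √Real.pi * r)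
  rw [← mul_assoc, mul_mul_mul_comm, Real.mul_self_sqrt Real.pi_pos.le, sq]

theorem uniformCauchySeqOn_of_cauchySeq {F : ℕ → L2C s} (hF : CauchySeq F) {g : ℕ → ℂ → ℂ}
    (hg : ∀ n, DifferentiableOn ℂ (g n) s) (hFg : ∀ n, F n =ᵐ[volume.restrict s] g n) {t : Set ℂ}
    {r : ℝ} (hr : 0 < r) (hts : ∀ z ∈ t, closedBall z r ⊆ s) :
    UniformCauchySeqOn g atTop t := by
  rw [Metric.uniformCauchySeqOn_iff]
  intro ε hε
  have hc : 0 < √Real.pi * r := by positivity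
  obtain ⟨N, hN⟩ := Metric.cauchySeq_iff.1 hF (√Real.pi * r * ε) (by positivity)
  refine ⟨N, fun m hm n hn z hz => lt_of_mul_lt_mul_left ?_ hc.le⟩
  have hsub : (F m - F n : L2C s) =ᵐ[volume.restrict s] g m - g n :=
    (Lp.coeFn_sub _ _).trans ((hFg m).sub (hFg n))
  rw [dist_eq_norm]
  calc √Real.pi * r * ‖g m z - g n z‖
      ≤ ‖F m - F n‖ := sqrt_pi_mul_norm_le ((hg m).sub (hg n)) hsub hr (hts z hz)
    _ < √Real.pi * r * ε := dist_eq_norm (F m) (F n) ▸ hN m hm n hn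

theorem isClosed_A2C (hs : IsOpen s) : IsClosed (A2C s : Set (L2C s)) := by
  refine IsSeqClosed.isClosed fun F f hF hlim => ?_
  choose g hg hFg using hF
  have hcauchy : ∀ a ∈ s, ∃ t ∈ 𝓝[s] a, UniformCauchySeqOn g atTop t := by
    intro a ha
    obtain ⟨r, hr, hrs⟩ := Metric.nhds_basis_closedBall.mem_iff.1 (hs.mem_nhds ha)
    refine ⟨ball a (r / 2), mem_nhdsWithin_of_mem_nhds (ball_mem_nhds a (half_pos hr)),
      uniformCauchySeqOn_of_cauchySeq hlim.cauchySeq hg hFg (half_pos hr) fun z hz => ?_⟩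
    exact (closedBall_subset_closedBall' (by linarith [mem_ball.1 hz])).trans hrs
  obtain ⟨G, hG⟩ := exists_tendstoLocallyUniformlyOn hcauchy
  refine ⟨G, hG.differentiableOn (.of_forall hg) hs, ?_⟩
  obtain ⟨ns, hns, hae⟩ := (tendstoInMeasure_of_tendsto_Lp hlim).exists_seq_tendsto_ae
  filter_upwards [hae, ae_all_iff.2 hFg, ae_restrict_mem hs.measurableSet] with z hf hFgz hz
  simp only [hFgz] at hf
  exact tendsto_nhds_unique hf ((hG.tendsto_at hz).comp hns.tendsto_atTop)

end Bergman

/-! ### Multiplication operators -/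

section Multiplication

variable {X 𝕜 : Type*} [RCLike 𝕜] [TopologicalSpace X] {K : Set X} [CompactSpace K]

theorem norm_extend_zero_le (φ : C(K, 𝕜)) (x : X) : ‖Function.extend Subtype.val φ 0 x‖ ≤ ‖φ‖ := by
  by_cases hx : x ∈ K
  · simpa only [Subtype.val_injective.extend_apply φ 0 ⟨x, hx⟩] using φ.norm_coe_le_norm ⟨x, hx⟩
  · simp [Function.extend_apply', hx]

variable [MeasurableSpace X] [BorelSpace X]

theorem memLp_top_extend_zero (hK : MeasurableSet K) (μ : Measure X) (φ : C(K, 𝕜)) :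
    MemLp (Function.extend Subtype.val φ 0) ∞ μ :=
  memLp_top_of_bound ((MeasurableEmbedding.subtype_coe hK).measurable_extend
    φ.continuous.measurable measurable_const).aestronglyMeasurable ‖φ‖
    (.of_forall (norm_extend_zero_le φ))

/-- Extension by zero, as a map from the continuous functions on a compact set `K` to `L∞`. -/
def extendLinfty (hK : MeasurableSet K) (μ : Measure X) : C(K, 𝕜) →L[𝕜] Lp 𝕜 ∞ μ :=
  LinearMap.mkContinuous
    { toFun φ := (memLp_top_extend_zero hK μ φ).toLp
      map_add' φ ψ := by
        rw [← MemLp.toLp_add]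
        simp only [ContinuousMap.coe_add, ← Function.extend_add, add_zero]
      map_smul' c φ := by
        rw [RingHom.id_apply, ← MemLp.toLp_const_smul]
        simp only [ContinuousMap.coe_smul, ← Function.extend_smul, smul_zero] }
    1 fun φ => by
      rw [one_mul]
      refine (Lp.norm_toLp _ (memLp_top_extend_zero hK μ φ)).trans_le
        (ENNReal.toReal_le_of_le_ofReal (norm_nonneg φ) ?_)
      rw [eLpNorm_exponent_top]
      exact eLpNormEssSup_le_of_ae_bound (.of_forall (norm_extend_zero_le φ))

theorem coeFn_extendLinfty (hK : MeasurableSet K) (μ : Measure X) (φ : C(K, 𝕜)) :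
    extendLinfty hK μ φ =ᵐ[μ] Function.extend Subtype.val φ 0 :=
  (memLp_top_extend_zero hK μ φ).coeFn_toLp

/-- The multiplication operator on `L²` whose symbol is a continuous function on a compact set `K`,
extended by zero. -/
def mulOperator (hK : MeasurableSet K) (μ : Measure X) :
    C(K, 𝕜) →L[𝕜] Lp 𝕜 2 μ →L[𝕜] Lp 𝕜 2 μ :=
  ((ContinuousLinearMap.mul 𝕜 𝕜).holderL μ ∞ 2 2).comp (extendLinfty hK μ)

theorem coeFn_mulOperator (hK : MeasurableSet K) (μ : Measure X) (φ : C(K, 𝕜)) (f : Lp 𝕜 2 μ) :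
    mulOperator hK μ φ f =ᵐ[μ] fun x => Function.extend Subtype.val φ 0 x * f x := by
  filter_upwards [(ContinuousLinearMap.mul 𝕜 𝕜).coeFn_holder (r := 2) (extendLinfty hK μ φ) f,
    coeFn_extendLinfty hK μ φ] with x hx hφ
  rw [← hφ]
  exact hx

theorem coeFn_mulOperator_restrict (hK : MeasurableSet K) {μ : Measure X} {s : Set X}
    (hs : MeasurableSet s) (hsK : s ⊆ K) (φ : C(K, 𝕜)) (f : Lp 𝕜 2 (μ.restrict s)) {φ' : X → 𝕜}
    (hφ : ∀ x : K, φ x = φ' x) :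
    mulOperator hK (μ.restrict s) φ f =ᵐ[μ.restrict s] fun x => φ' x * f x := by
  filter_upwards [coeFn_mulOperator hK (μ.restrict s) φ f, ae_restrict_mem hs] with x hx hxs
  rw [hx, Subtype.val_injective.extend_apply φ 0 ⟨x, hsK hxs⟩, hφ]

theorem mulOperator_mul (hK : MeasurableSet K) (μ : Measure X) (φ ψ : C(K, 𝕜)) :
    mulOperator hK μ (φ * ψ) = (mulOperator hK μ φ).comp (mulOperator hK μ ψ) := by
  refine ContinuousLinearMap.ext fun f => Lp.ext ?_
  have extend_mul : Function.extend Subtype.val (⇑φ * ⇑ψ) 0 =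
      Function.extend Subtype.val φ 0 * Function.extend Subtype.val ψ (0 : X → 𝕜) := by
    rw [← Function.extend_mul, mul_zero]
  filter_upwards [coeFn_mulOperator hK μ (φ * ψ) f, coeFn_mulOperator hK μ ψ f,
    coeFn_mulOperator hK μ φ (mulOperator hK μ ψ f)] with x hφψ hψ hφ
  rw [hφψ, ContinuousLinearMap.comp_apply, hφ, hψ, ContinuousMap.coe_mul, extend_mul,
    Pi.mul_apply, mul_assoc]

end Multiplication

/-! ### Hankel operators -/

section Hankel

variable {𝕜 E : Type*} [RCLike 𝕜] [NormedAddCommGroup E] [InnerProductSpace 𝕜 E]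
  {K : Submodule 𝕜 E} [K.HasOrthogonalProjection] {M N : E →L[𝕜] E}

/-- The abstract Hankel operator of `M` with respect to a subspace `K`: the off-diagonal block
`K → Kᗮ` of `M`, with values in the whole space. -/
def hankel (K : Submodule 𝕜 E) [K.HasOrthogonalProjection] (M : E →L[𝕜] E) : K →L[𝕜] E :=
  Kᗮ.starProjection ∘L M ∘L K.subtypeL

theorem hankel_apply (f : K) : hankel K M f = M f - K.starProjection (M f) := by
  rw [hankel, Submodule.starProjection_orthogonal']
  rfl

theorem hankel_apply_mem_orthogonal (f : K) : hankel K M f ∈ Kᗮ :=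
  Submodule.starProjection_apply_mem _ _

theorem sub_hankel_apply_mem (f : K) : M f - hankel K M f ∈ K := by
  rw [hankel_apply, sub_sub_cancel]
  exact Submodule.starProjection_apply_mem _ _

theorem hankel_congr (h : ∀ f ∈ K, M f - N f ∈ K) : hankel K M = hankel K N := by
  ext f
  rw [← sub_eq_zero, hankel_apply, hankel_apply, sub_sub_sub_comm, ← map_sub,
    Submodule.starProjection_eq_self_iff.2 (h f f.2), sub_self]

theorem hankel_add (M N : E →L[𝕜] E) : hankel K (M + N) = hankel K M + hankel K N := by
  simp only [hankel, ContinuousLinearMap.add_comp, ContinuousLinearMap.comp_add]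

theorem hankel_comp (M N : E →L[𝕜] E) :
    hankel K (M ∘L N) = hankel K M ∘L K.orthogonalProjectionOnto ∘L N ∘L K.subtypeL +
      (Kᗮ.starProjection ∘L M) ∘L hankel K N := by
  ext f
  simp [hankel, Submodule.starProjection_orthogonal']

theorem continuous_hankel : Continuous (hankel K : (E →L[𝕜] E) → K →L[𝕜] E) := by
  unfold hankel
  fun_prop

theorem isCompactOperator_hankel (hM : IsCompactOperator M) : IsCompactOperator (hankel K M) :=
  (hM.comp_clm K.subtypeL).clm_comp Kᗮ.starProjection

theorem isCompactOperator_hankel_comp (hM : IsCompactOperator (hankel K M))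
    (hN : IsCompactOperator (hankel K N)) : IsCompactOperator (hankel K (M ∘L N)) := by
  rw [hankel_comp]
  exact (hM.comp_clm (K.orthogonalProjectionOnto ∘L N ∘L K.subtypeL)).add
    (hN.clm_comp (Kᗮ.starProjection ∘L M))

end Hankel

/-! ### Hankel operators on the Bergman space -/

section BergmanHankel

variable {Ω : Set ℂ}

theorem isHankelC_hankel [(A2C Ω).HasOrthogonalProjection] {φ : ℂ → ℂ} {M : L2C Ω →L[ℂ] L2C Ω}
    (hM : ∀ f : L2C Ω, M f =ᵐ[volume.restrict Ω] fun z => φ z * f z) :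
    IsHankelC Ω φ (hankel (A2C Ω) M) := by
  refine ⟨fun f g hg => (Submodule.mem_orthogonal' _ _).1 (hankel_apply_mem_orthogonal f) g hg,
    fun f => ?_⟩
  obtain ⟨g, hg, hfg⟩ := sub_hankel_apply_mem (M := M) f
  refine ⟨g, hg, ?_⟩
  filter_upwards [hfg, hM f, Lp.coeFn_sub (M f) (hankel (A2C Ω) M f)] with z hz hMz hsub
  rw [← hz, hsub, Pi.sub_apply, hMz]

theorem isCompactOperator_hankel_of_differentiableOn [(A2C Ω).HasOrthogonalProjection]
    {φ : ℂ → ℂ} (hφ : DifferentiableOn ℂ φ Ω) {M : L2C Ω →L[ℂ] L2C Ω}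
    (hM : ∀ f : L2C Ω, M f =ᵐ[volume.restrict Ω] fun z => φ z * f z) :
    IsCompactOperator (hankel (A2C Ω) M) := by
  have hM0 : ∀ f ∈ A2C Ω, M f - (0 : L2C Ω →L[ℂ] L2C Ω) f ∈ A2C Ω := by
    rintro f ⟨g, hg, hfg⟩
    rw [zero_apply, sub_zero]
    refine ⟨fun z => φ z * g z, hφ.mul hg, ?_⟩
    filter_upwards [hM f, hfg] with z hz hfgz
    rw [hz, hfgz]
  rw [hankel_congr hM0]
  exact isCompactOperator_hankel isCompactOperator_zero

theorem isCompactOperator_hankel_conj [(A2C Ω).HasOrthogonalProjection] (ho : IsOpen Ω)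
    (hb : Bornology.IsBounded Ω) {M : L2C Ω →L[ℂ] L2C Ω}
    (hM : ∀ f : L2C Ω, M f =ᵐ[volume.restrict Ω] fun z => starRingEnd ℂ z * f z) :
    IsCompactOperator (hankel (A2C Ω) M) := by
  have := isFiniteMeasure_restrict.2 (hb.measure_lt_top (μ := volume)).ne
  obtain ⟨T, hT, hTf⟩ := exists_isCompactOperator_cauchyTransform ho.measurableSet hb
  have hMT : ∀ f ∈ A2C Ω, M f - T f ∈ A2C Ω := by
    rintro f ⟨g, hg, hfg⟩
    have hgi : IntegrableOn g Ω := ((Lp.memLp f).integrable one_le_two).congr hfg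
    have hfg' : cauchyTransform Ω f = cauchyTransform Ω g := funext fun z =>
      congrArg _ (integral_congr_ae (hfg.mono fun w hw => congrArg ((z - w)⁻¹ * ·) hw))
    refine ⟨_, differentiableOn_conj_mul_sub_cauchyTransform ho hg hgi, ?_⟩
    filter_upwards [Lp.coeFn_sub (M f) (T f), hM f, hTf f, hfg] with z hsub hMz hTz hz
    rw [hsub, Pi.sub_apply, hMz, hTz, hz, hfg']
  rw [hankel_congr hMT]
  exact isCompactOperator_hankel hT

theorem isCompactOperator_hankel_mulOperator [CompactSpace (closure Ω)]
    [(A2C Ω).HasOrthogonalProjection] (ho : IsOpen Ω) (hb : Bornology.IsBounded Ω)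
    (φ : C(closure Ω, ℂ)) :
    IsCompactOperator (hankel (A2C Ω)
      (mulOperator isClosed_closure.measurableSet (volume.restrict Ω) φ)) := by
  have coeFn_mul (ψ : C(closure Ω, ℂ)) {ψ' : ℂ → ℂ} (h : ∀ z : closure Ω, ψ z = ψ' z) (f) :=
    coeFn_mulOperator_restrict (μ := volume) isClosed_closure.measurableSet ho.measurableSet
      subset_closure ψ f h
  induction φ using ContinuousMap.induction_on_of_compact with
  | const c =>
    exact isCompactOperator_hankel_of_differentiableOn (differentiableOn_const c)
      (coeFn_mul _ fun _ => rfl)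
  | id =>
    exact isCompactOperator_hankel_of_differentiableOn differentiableOn_id
      (coeFn_mul _ fun _ => rfl)
  | star_id => exact isCompactOperator_hankel_conj ho hb (coeFn_mul _ fun _ => rfl)
  | add ψ χ hψ hχ =>
    rw [map_add, hankel_add]
    exact hψ.add hχ
  | mul ψ χ hψ hχ =>
    rw [mulOperator_mul]
    exact isCompactOperator_hankel_comp hψ hχ
  | frequently ψ h =>
    have hclosed := isClosed_setOfPred_isCompactOperator.preimage
      ((continuous_hankel (K := A2C Ω)).comp (mulOperator (𝕜 := ℂ) (K := closure Ω)
        isClosed_closure.measurableSet (volume.restrict Ω)).continuous)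
    exact isClosed_iff_frequently.1 hclosed ψ h

end BergmanHankel

theorem stmt2_general (Ω : Set ℂ) (hΩopen : IsOpen Ω) (hΩbdd : Bornology.IsBounded Ω)
    (φ : ℂ → ℂ) (hφ : ContinuousOn φ (closure Ω)) :
    ∃ H : A2C Ω →L[ℂ] L2C Ω, IsHankelC Ω φ H ∧ IsCompactOperator H := by
  have : CompactSpace (closure Ω) := isCompact_iff_compactSpace.1 hΩbdd.isCompact_closure
  have : CompleteSpace (A2C Ω) := (isClosed_A2C hΩopen).completeSpace_coe
  have hcompact := isCompactOperator_hankel_mulOperator hΩopen hΩbdd ⟨_, hφ.domRestrict⟩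
  refine ⟨_, isHankelC_hankel fun f => ?_, hcompact⟩
  exact coeFn_mulOperator_restrict isClosed_closure.measurableSet hΩopen.measurableSet
    subset_closure _ f fun _ => rfl

theorem stmt2 (Ω : Set ℂ) (hΩopen : IsOpen Ω) (hΩbdd : Bornology.IsBounded Ω)
    (hΩconn : IsConnected Ω) (φ : ℂ → ℂ) (hφ : ContinuousOn φ (closure Ω)) :
    ∃ H : A2C Ω →L[ℂ] L2C Ω, IsHankelC Ω φ H ∧ IsCompactOperator H :=
  stmt2_general Ω hΩopen hΩbdd φ hφ
end
end

section
/- Let X and Y be complex Hilbert spaces and let T : X → Y be a bounded linear operator. Then T is compact if and only if for every ε > 0 there exists a compact bounded linear operator K_ε : X → Y such that ‖T h‖_Y ≤ ε ‖h‖_X + ‖K_ε h‖_Y for all h ∈ X. -/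
/-!
Let `B` be the unit ball of `X`. Applied to differences, the inequality with `ε / 4` in place of `ε`
says that `T x` and `T y` are within `ε` of each other whenever `x, y ∈ B` and `K x`, `K y` are
within `ε / 2`. Hence a finite `ε / 2`-net of the totally bounded set `K '' B`, with centres
`K y`, `y ∈ B`, yields the finite `ε`-net of points `T y` of `T '' B`. As `ε` is arbitrary, `T '' B`
is totally bounded, and completeness of `Y` makes it relatively compact.
-/

open Metric Set
open scoped Uniformity

theorem totallyBounded_image_of_forall_exists_totallyBounded_image {α β γ : Type*}
    [UniformSpace β] [UniformSpace γ] {f : α → β} {s : Set α}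
    (h : ∀ V ∈ 𝓤 β, ∃ g : α → γ, TotallyBounded (g '' s) ∧
      ∃ W ∈ 𝓤 γ, ∀ x ∈ s, ∀ y ∈ s, (g x, g y) ∈ W → (f x, f y) ∈ V) :
    TotallyBounded (f '' s) := by
  intro V hV
  obtain ⟨g, hg, W, hW, hWV⟩ := h V hV
  obtain ⟨t, hts, ht, hcover⟩ := exists_subset_image_finite_and.1 (hg.exists_subset hW)
  refine ⟨f '' t, ht.image f, ?_⟩
  rintro _ ⟨x, hx, rfl⟩
  obtain ⟨y, hy, hxy⟩ : ∃ y ∈ t, (g x, g y) ∈ W := by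
    simpa using hcover (mem_image_of_mem g hx)
  exact mem_biUnion (mem_image_of_mem f hy) (hWV x hx y (hts hy) hxy)

section TotallyBounded

variable {𝕜₁ 𝕜₂ E F : Type*} [NontriviallyNormedField 𝕜₁] [SeminormedRing 𝕜₂] {σ₁₂ : 𝕜₁ →+* 𝕜₂}
  [SeminormedAddCommGroup E] [NormedSpace 𝕜₁ E] [UniformSpace F] [AddCommMonoid F] [Module 𝕜₂ F]
  {T : E →ₛₗ[σ₁₂] F}

theorem totallyBounded_image_closedBall_of_isCompactOperator [ContinuousConstSMul 𝕜₂ F]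
    (hT : IsCompactOperator T) (r : ℝ) : TotallyBounded (T '' closedBall 0 r) :=
  let ⟨_, hC, hTC⟩ := hT.image_closedBall_subset_compact r
  hC.totallyBounded.subset hTC

theorem isCompactOperator_of_totallyBounded_image_closedBall [CompleteSpace F] {r : ℝ}
    (hr : 0 < r) (hT : TotallyBounded (T '' closedBall 0 r)) : IsCompactOperator T :=
  (isCompactOperator_iff_exists_mem_nhds_image_subset_compact T).2
    ⟨closedBall 0 r, closedBall_mem_nhds 0 hr, closure (T '' closedBall 0 r),
      hT.closure.isCompact_of_isClosed isClosed_closure, subset_closure⟩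

end TotallyBounded

section Seminormed

variable {𝕜₁ 𝕜₂ 𝕜₃ X Y Z : Type*} [NontriviallyNormedField 𝕜₁]
  [SeminormedAddCommGroup X] [NormedSpace 𝕜₁ X] [SeminormedAddCommGroup Y]
  [SeminormedAddCommGroup Z]

theorem isCompactOperator_of_forall_norm_map_le_add [SeminormedRing 𝕜₂] [Module 𝕜₂ Y]
    [SeminormedRing 𝕜₃] [Module 𝕜₃ Z] [ContinuousConstSMul 𝕜₃ Z] [CompleteSpace Y]
    {σ₁₂ : 𝕜₁ →+* 𝕜₂} {σ₁₃ : 𝕜₁ →+* 𝕜₃} {T : X →ₛₗ[σ₁₂] Y}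
    (h : ∀ ε : ℝ, 0 < ε → ∃ K : X →ₛₗ[σ₁₃] Z, IsCompactOperator K ∧
      ∀ x, ‖T x‖ ≤ ε * ‖x‖ + ‖K x‖) :
    IsCompactOperator T := by
  refine isCompactOperator_of_totallyBounded_image_closedBall one_pos <|
    totallyBounded_image_of_forall_exists_totallyBounded_image (γ := Z) fun V hV ↦ ?_
  obtain ⟨ε, hε, hεV⟩ := mem_uniformity_dist.1 hV
  obtain ⟨K, hK, hTK⟩ := h (ε / 4) (by positivity)
  refine ⟨K, totallyBounded_image_closedBall_of_isCompactOperator hK 1,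
    {p | dist p.1 p.2 < ε / 2}, dist_mem_uniformity (half_pos hε), fun x hx y hy hKxy ↦ hεV ?_⟩
  have hxy : ‖x - y‖ ≤ 2 := by
    rw [mem_closedBall_zero_iff] at hx hy
    linarith [norm_sub_le x y]
  calc
    dist (T x) (T y) = ‖T (x - y)‖ := by rw [map_sub, dist_eq_norm]
    _ ≤ ε / 4 * ‖x - y‖ + ‖K (x - y)‖ := hTK (x - y)
    _ = ε / 4 * ‖x - y‖ + dist (K x) (K y) := by rw [map_sub, dist_eq_norm]
    _ < ε / 4 * 2 + ε / 2 := add_lt_add_of_le_of_lt (by gcongr) hKxy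
    _ = ε := by ring

theorem stmt3_general [NontriviallyNormedField 𝕜₂] [NormedSpace 𝕜₂ Y] [CompleteSpace Y]
    {σ₁₂ : 𝕜₁ →+* 𝕜₂} [RingHomIsometric σ₁₂] (T : X →ₛₗ[σ₁₂] Y) :
    IsCompactOperator T ↔
      ∀ ε : ℝ, 0 < ε → ∃ K : X →SL[σ₁₂] Y, IsCompactOperator K ∧
        ∀ x : X, ‖T x‖ ≤ ε * ‖x‖ + ‖K x‖ := by
  refine ⟨fun hT ε hε ↦ ⟨.mkOfIsCompactOperator hT, hT, fun x ↦ ?_⟩, fun h ↦ ?_⟩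
  · exact le_add_of_nonneg_left (by positivity)
  · refine isCompactOperator_of_forall_norm_map_le_add (Z := Y) (σ₁₃ := σ₁₂) fun ε hε ↦ ?_
    obtain ⟨K, hK, hTK⟩ := h ε hε
    exact ⟨K.toLinearMap, hK, hTK⟩

end Seminormed

theorem stmt3 {X Y : Type*} [NormedAddCommGroup X] [InnerProductSpace ℂ X] [CompleteSpace X]
    [NormedAddCommGroup Y] [InnerProductSpace ℂ Y] [CompleteSpace Y] (T : X →L[ℂ] Y) :
    IsCompactOperator T ↔
      ∀ ε : ℝ, 0 < ε → ∃ K : X →L[ℂ] Y, IsCompactOperator K ∧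
        ∀ h : X, ‖T h‖ ≤ ε * ‖h‖ + ‖K h‖ :=
  stmt3_general T.toLinearMap
end

section
/- Let n ≥ 1, p ∈ ℂⁿ, r > 0, and ε > 0. Then there exist δ with 0 < δ < r and a smooth function ψ : ℂⁿ → ℝ such that: (i) −1 ≤ ψ(z) ≤ 0 for all z ∈ B(p,r); (ii) the complex Hessian of ψ is nonnegative everywhere, i.e., H_ψ(z)(w) ≥ 0 for all z, w ∈ ℂⁿ; and (iii) H_ψ(z)(w) ≥ (1/ε) |w|² for all w ∈ ℂⁿ and all z with r − δ ≤ |z − p| ≤ r. -/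
open Metric

noncomputable section

abbrev Cn (n : ℕ) := EuclideanSpace ℂ (Fin n)

/-- The complex Hessian of `ψ : ℂⁿ → ℝ` at `z` in direction `w`:
`H_ψ(z)(w) = Σ_{j,k} (∂²ψ/∂z_j∂z̄_k)(z) w_j w̄_k = ¼(D²ψ(z)[w,w] + D²ψ(z)[iw,iw])`. -/
def complexHessian (n : ℕ) (ψ : Cn n → ℝ) (z w : Cn n) : ℝ :=
  (1 / 4 : ℝ) * (fderiv ℝ (fderiv ℝ ψ) z w w +
    fderiv ℝ (fderiv ℝ ψ) z (Complex.I • w) (Complex.I • w))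

/-!
The function `exp (A (‖z - p‖² - r²)) - 1` takes values in `(-1, 0]` on the ball when `A ≥ 0`.
By the chain rule the complex Hessian of `f ∘ u` is `f'(u)` times that of `u` plus a nonnegative
multiple of `f''(u)`, and the complex Hessian of `‖z - p‖²` is `‖w‖²`. Hence the complex Hessian of
the function above is at least `A exp (A (‖z - p‖² - r²)) ‖w‖²`. With `A = e / ε` this is at least
`‖w‖² / ε` as soon as `‖z - p‖² ≥ r² - 1 / A`, which holds near the boundary sphere.
-/

open scoped Topology

lemma exists_pos_lt_forall_sq_sub_le_sq {r η : ℝ} (hr : 0 < r) (hη : 0 < η) :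
    ∃ δ, 0 < δ ∧ δ < r ∧ ∀ t, r - δ ≤ t → r ^ 2 - η ≤ t ^ 2 := by
  obtain ⟨δ, hδ, hδ_lt⟩ := exists_between (show 0 < min r (η / (2 * r)) by positivity)
  obtain ⟨hδr, hδη⟩ := lt_min_iff.mp hδ_lt
  rw [lt_div_iff₀ (by positivity)] at hδη
  refine ⟨δ, hδ, hδr, fun t ht ↦ ?_⟩
  calc r ^ 2 - η ≤ (r - δ) ^ 2 := by nlinarith [sq_nonneg δ]
    _ ≤ t ^ 2 := pow_le_pow_left₀ (sub_nonneg.mpr hδr.le) ht 2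

lemma deriv_exp_mul_sub (A c : ℝ) :
    deriv (fun t ↦ Real.exp (A * (t - c))) = fun t ↦ A * Real.exp (A * (t - c)) := by
  ext t
  simpa [mul_comm] using ((((hasDerivAt_id t).sub_const c).const_mul A).exp).deriv

section RealSecondDerivative

variable {F : Type*} [NormedAddCommGroup F]

lemma fderiv_fderiv_comp_apply [NormedSpace ℝ F] {f : ℝ → ℝ} {u : F → ℝ} {z : F}
    (hf : ContDiffAt ℝ 2 f (u z)) (hu : ContDiffAt ℝ 2 u z) (v w : F) :
    fderiv ℝ (fderiv ℝ (f ∘ u)) z v w =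
      deriv (deriv f) (u z) * fderiv ℝ u z v * fderiv ℝ u z w +
        deriv f (u z) * fderiv ℝ (fderiv ℝ u) z v w := by
  have chain_rule : fderiv ℝ (f ∘ u) =ᶠ[𝓝 z] fun y ↦ deriv f (u y) • fderiv ℝ u y := by
    filter_upwards [hu.continuousAt.eventually (hf.eventually (by simp)),
      hu.eventually (by simp)] with y hfy huy
    exact ((hfy.differentiableAt two_ne_zero).hasDerivAt.comp_hasFDerivAt y
      (huy.differentiableAt two_ne_zero).hasFDerivAt).fderiv
  have hf' : DifferentiableAt ℝ (deriv f) (u z) :=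
    (hf.derivWithin (m := 1) (by norm_num)).differentiableAt one_ne_zero
  have hu' : DifferentiableAt ℝ (fderiv ℝ u) z :=
    (hu.fderiv_right (m := 1) (by norm_num)).differentiableAt one_ne_zero
  have hf'u : HasFDerivAt (fun y ↦ deriv f (u y)) (deriv (deriv f) (u z) • fderiv ℝ u z) z :=
    hf'.hasDerivAt.comp_hasFDerivAt z (hu.differentiableAt two_ne_zero).hasFDerivAt
  rw [chain_rule.fderiv_eq, (hf'u.fun_smul hu'.hasFDerivAt).fderiv]
  simp only [add_apply, smul_apply, ContinuousLinearMap.smulRight_apply, smul_eq_mul]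
  ring

lemma fderiv_fderiv_norm_sub_sq_apply [InnerProductSpace ℝ F] (p z v w : F) :
    fderiv ℝ (fderiv ℝ fun y ↦ ‖y - p‖ ^ 2) z v w = 2 * inner ℝ v w := by
  have first_derivative :
      fderiv ℝ (fun y ↦ ‖y - p‖ ^ 2) = fun y ↦ (2 • innerSL ℝ (E := F)) (y - p) := by
    ext1 y
    rw [fderiv_comp_sub (f := fun y ↦ ‖y‖ ^ 2), fderiv_norm_sq]
    rfl
  rw [first_derivative, fderiv_comp_sub, ContinuousLinearMap.fderiv]
  simp [innerSL_apply_apply ℝ]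

end RealSecondDerivative

section LeviForm

variable {E : Type*} [NormedAddCommGroup E] [InnerProductSpace ℂ E]

/-- The Levi form (complex Hessian) of a real-valued function `ψ` on a complex inner product
space, at the point `z` in the direction `w`. It is encoded through real second derivatives, so
that no coordinates are needed and `complexHessian` is the case of `ℂⁿ`. -/
def leviForm (ψ : E → ℝ) (z w : E) : ℝ :=
  (1 / 4 : ℝ) * (fderiv ℝ (fderiv ℝ ψ) z w w +
    fderiv ℝ (fderiv ℝ ψ) z (Complex.I • w) (Complex.I • w))

lemma leviForm_comp {f : ℝ → ℝ} {u : E → ℝ} {z : E}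
    (hf : ContDiffAt ℝ 2 f (u z)) (hu : ContDiffAt ℝ 2 u z) (w : E) :
    leviForm (f ∘ u) z w = deriv f (u z) * leviForm u z w +
      deriv (deriv f) (u z) / 4 *
        (fderiv ℝ u z w ^ 2 + fderiv ℝ u z (Complex.I • w) ^ 2) := by
  simp only [leviForm, fderiv_fderiv_comp_apply hf hu]
  ring

lemma deriv_mul_leviForm_le_leviForm_comp {f : ℝ → ℝ} {u : E → ℝ} {z : E}
    (hf : ContDiffAt ℝ 2 f (u z)) (hu : ContDiffAt ℝ 2 u z)
    (hf'' : 0 ≤ deriv (deriv f) (u z)) (w : E) :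
    deriv f (u z) * leviForm u z w ≤ leviForm (f ∘ u) z w := by
  rw [leviForm_comp hf hu]
  exact le_add_of_nonneg_right (by positivity)

lemma leviForm_norm_sub_sq (p z w : E) : leviForm (fun y ↦ ‖y - p‖ ^ 2) z w = ‖w‖ ^ 2 := by
  have second_derivative (v : E) :
      fderiv ℝ (fderiv ℝ fun y ↦ ‖y - p‖ ^ 2) z v v = 2 * ‖v‖ ^ 2 :=
    letI := InnerProductSpace.rclikeToReal ℂ E
    (fderiv_fderiv_norm_sub_sq_apply p z v v).trans
      (congrArg (2 * ·) (real_inner_self_eq_norm_sq v))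
  simp only [leviForm, second_derivative, norm_smul, Complex.norm_I, one_mul]
  ring

end LeviForm

section ExpBarrier

variable {E : Type*} [NormedAddCommGroup E]

/-- The exponential barrier `exp (A (‖z - p‖² - r²)) - 1` of the ball of center `p` and radius
`r`: it vanishes on the boundary sphere, where its Levi form in the direction `w` is at least
`A ‖w‖²`. -/
def expBarrier (p : E) (r A : ℝ) (z : E) : ℝ :=
  Real.exp (A * (‖z - p‖ ^ 2 - r ^ 2)) - 1

lemma neg_one_lt_expBarrier (p : E) (r A : ℝ) (z : E) : -1 < expBarrier p r A z := by
  simp only [expBarrier, neg_lt_sub_iff_lt_add, lt_add_iff_pos_right, Real.exp_pos]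

lemma expBarrier_nonpos {p z : E} {r A : ℝ} (hA : 0 ≤ A) (hz : ‖z - p‖ ≤ r) :
    expBarrier p r A z ≤ 0 := by
  have h_sq : ‖z - p‖ ^ 2 ≤ r ^ 2 := by gcongr
  rw [expBarrier, sub_nonpos, Real.exp_le_one_iff]
  exact mul_nonpos_of_nonneg_of_nonpos hA (sub_nonpos.mpr h_sq)

variable [InnerProductSpace ℂ E]

lemma contDiff_expBarrier {k : WithTop ℕ∞} (p : E) (r A : ℝ) :
    ContDiff ℝ k (expBarrier p r A) := by
  have h_sq : ContDiff ℝ k fun z ↦ ‖z - p‖ ^ 2 := (contDiff_id.sub contDiff_const).norm_sq ℂ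
  unfold expBarrier
  fun_prop

lemma le_leviForm_expBarrier (p : E) (r A : ℝ) (z w : E) :
    A * Real.exp (A * (‖z - p‖ ^ 2 - r ^ 2)) * ‖w‖ ^ 2 ≤ leviForm (expBarrier p r A) z w := by
  let f (t : ℝ) : ℝ := Real.exp (A * (t - r ^ 2)) - 1
  have hf : ContDiff ℝ 2 f := by fun_prop
  have hu : ContDiff ℝ 2 fun y : E ↦ ‖y - p‖ ^ 2 := (contDiff_id.sub contDiff_const).norm_sq ℂ
  have hf' : deriv f = fun t ↦ A * Real.exp (A * (t - r ^ 2)) := by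
    simp only [f, deriv_sub_const_fun, deriv_exp_mul_sub]
  have hf'' (t : ℝ) : 0 ≤ deriv (deriv f) t := by
    rw [hf', deriv_const_mul_field, deriv_exp_mul_sub, ← mul_assoc]
    exact mul_nonneg (mul_self_nonneg A) (Real.exp_pos _).le
  have h_comp := deriv_mul_leviForm_le_leviForm_comp hf.contDiffAt hu.contDiffAt
    (hf'' (‖z - p‖ ^ 2)) w
  rwa [leviForm_norm_sub_sq, hf'] at h_comp

lemma leviForm_expBarrier_nonneg (p : E) (r : ℝ) {A : ℝ} (hA : 0 ≤ A) (z w : E) :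
    0 ≤ leviForm (expBarrier p r A) z w :=
  le_trans (by positivity) (le_leviForm_expBarrier p r A z w)

lemma le_leviForm_expBarrier_of_sub_inv_le {p z : E} {r A : ℝ} (hA : 0 < A)
    (hz : r ^ 2 - A⁻¹ ≤ ‖z - p‖ ^ 2) (w : E) :
    A * Real.exp (-1) * ‖w‖ ^ 2 ≤ leviForm (expBarrier p r A) z w := by
  have h_exponent : -1 ≤ A * (‖z - p‖ ^ 2 - r ^ 2) :=
    calc -1 = A * (-A⁻¹) := by field_simp
      _ ≤ A * (‖z - p‖ ^ 2 - r ^ 2) := by gcongr; linarith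
  exact le_trans (by gcongr) (le_leviForm_expBarrier p r A z w)

end ExpBarrier

theorem stmt12_general {E : Type*} [NormedAddCommGroup E] [InnerProductSpace ℂ E]
    (p : E) (r : ℝ) (hr : 0 < r) (ε : ℝ) (hε : 0 < ε) :
    ∃ δ : ℝ, 0 < δ ∧ δ < r ∧
      ∃ ψ : E → ℝ, ContDiff ℝ (⊤ : ℕ∞) ψ ∧
        (∀ z ∈ ball p r, -1 ≤ ψ z ∧ ψ z ≤ 0) ∧
        (∀ z w : E, 0 ≤ leviForm ψ z w) ∧
        (∀ z w : E, r - δ ≤ ‖z - p‖ → (1 / ε) * ‖w‖ ^ 2 ≤ leviForm ψ z w) := by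
  let A := Real.exp 1 / ε
  have hA : 0 < A := by positivity
  have hAε : A * Real.exp (-1) = 1 / ε := by
    simp only [A, Real.exp_neg]
    field_simp
  obtain ⟨δ, hδ, hδr, h_shell⟩ := exists_pos_lt_forall_sq_sub_le_sq hr (inv_pos.mpr hA)
  refine ⟨δ, hδ, hδr, expBarrier p r A, contDiff_expBarrier p r A,
    fun z hz ↦ ⟨(neg_one_lt_expBarrier p r A z).le, ?_⟩,
    leviForm_expBarrier_nonneg p r hA.le, fun z w hz ↦ ?_⟩
  · exact expBarrier_nonpos hA.le (mem_ball_iff_norm.mp hz).le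
  · exact hAε ▸ le_leviForm_expBarrier_of_sub_inv_le hA (h_shell _ hz) w

theorem stmt12 (n : ℕ) (hn : 1 ≤ n) (p : Cn n) (r : ℝ) (hr : 0 < r) (ε : ℝ) (hε : 0 < ε) :
    ∃ δ : ℝ, 0 < δ ∧ δ < r ∧
      ∃ ψ : Cn n → ℝ, ContDiff ℝ (⊤ : ℕ∞) ψ ∧
        (∀ z ∈ ball p r, -1 ≤ ψ z ∧ ψ z ≤ 0) ∧
        (∀ z w : Cn n, 0 ≤ complexHessian n ψ z w) ∧
        (∀ z w : Cn n, r - δ ≤ ‖z - p‖ → ‖z - p‖ ≤ r →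
          (1 / ε) * ‖w‖ ^ 2 ≤ complexHessian n ψ z w) := by
  obtain ⟨δ, hδ, hδr, ψ, h_smooth, h_bounds, h_nonneg, h_shell⟩ := stmt12_general p r hr ε hε
  exact ⟨δ, hδ, hδr, ψ, h_smooth, h_bounds, h_nonneg, fun z w hz _ ↦ h_shell z w hz⟩
end
end
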